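/- arXiv:2103.04890 — 2 statements merged into one kernel-verified Lean document; each statement's English description precedes it below -/
import Mathlib

section
/- Let Γ be a subgroup of SL(2,ℝ) commensurable with SL(2,ℤ) whose cusp ∞ has width N (so that z ↦ z+N generates the translations in Γ up to ±I), let χ be a finite-order character of Γ, and let φ: ℍ → ℂ be holomorphic, N-periodic and holomorphic at ∞, satisfying (cz+d)^{-2} φ((az+b)/(cz+d)) = φ(z) + α c/(cz+d) for all (a b; c d) ∈ Γ, with α ≠ 0. Let k ≥ 1, f₁ ∈ M_{k-2}(Γ,χ), f₀ ∈ M_k(Γ,χ), and f = f₀ + φ f₁ with f not identically zero. Set W_f := −f² + α(f₁ f′ − f₁′ f). Then W_f is not identically zero, and its vanishing order at ∞ satisfies: v_∞(W_f) = 2 v_∞(f) if v_∞(f) ≤ v_∞(f₁), and v_∞(W_f) = v_∞(f) + v_∞(f₁) if v_∞(f) > v_∞(f₁). -/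
noncomputable section

open Complex Matrix Filter Topology

abbrev SL2R := Matrix.SpecialLinearGroup (Fin 2) ℝ
abbrev SL2Z := Matrix.SpecialLinearGroup (Fin 2) ℤ

/-- The upper half-plane, as a subset of `ℂ`. -/
def UHP : Set ℂ := {z : ℂ | 0 < z.im}

/-- The embedding of `SL(2,ℤ)` into `SL(2,ℝ)`. -/
def toR : SL2Z →* SL2R := Matrix.SpecialLinearGroup.map (Int.castRingHom ℝ)

/-- `SL(2,ℤ)` as a subgroup of `SL(2,ℝ)`. -/
def SL2ZR : Subgroup SL2R := Subgroup.map toR ⊤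

/-- Möbius action of a real matrix on a complex number. -/
def moeb (γ : SL2R) (z : ℂ) : ℂ :=
  ((γ.1 0 0 : ℂ) * z + (γ.1 0 1 : ℂ)) / ((γ.1 1 0 : ℂ) * z + (γ.1 1 1 : ℂ))

/-- The automorphy factor `cz + d`. -/
def jfac (γ : SL2R) (z : ℂ) : ℂ := (γ.1 1 0 : ℂ) * z + (γ.1 1 1 : ℂ)

/-- A holomorphic modular form of weight `k` and character `χ` on `Γ ≤ SL(2,ℝ)`
(for `Γ` commensurable with `SL(2,ℤ)`): holomorphic on `ℍ`, satisfying the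
transformation law, and holomorphic (bounded) at every cusp. -/
structure IsModularForm (Γ : Subgroup SL2R) (χ : SL2R → ℂ) (k : ℤ) (f : ℂ → ℂ) : Prop where
  holo : DifferentiableOn ℂ f UHP
  transform : ∀ γ ∈ Γ, ∀ z ∈ UHP, f (moeb γ z) = χ γ * jfac γ z ^ k * f z
  bdd_at_cusps : ∀ σ : SL2Z, ∃ C : ℝ, ∀ z ∈ UHP, 1 ≤ z.im →
    ‖jfac (toR σ) z ^ (-k) * f (moeb (toR σ) z)‖ ≤ C

/-- A finite-order character of `Γ`. -/
def IsCharacter (Γ : Subgroup SL2R) (χ : SL2R → ℂ) : Prop :=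
  (∀ γ ∈ Γ, ∀ δ ∈ Γ, χ (γ * δ) = χ γ * χ δ) ∧
    ∃ n : ℕ, 0 < n ∧ ∀ γ ∈ Γ, χ γ ^ n = 1

/-- `φ` is quasimodular of weight 2 and depth 1 on `Γ`, with constant `α`:
`(cz+d)⁻² φ(γz) = φ(z) + α c/(cz+d)`. -/
def IsQuasiWt2 (Γ : Subgroup SL2R) (α : ℂ) (φ : ℂ → ℂ) : Prop :=
  ∀ γ ∈ Γ, ∀ z ∈ UHP,
    (jfac γ z)⁻¹ ^ 2 * φ (moeb γ z) = φ z + α * (γ.1 1 0 : ℂ) / jfac γ z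

/-- `f` has vanishing order `ν` at the cusp `∞`, with respect to `q_N = e^{2πiz/N}`:
`q_N^{-ν}·f(z)` tends to a nonzero constant as `Im z → ∞`. -/
def VOrder (N : ℝ) (f : ℂ → ℂ) (ν : ℝ) : Prop :=
  ∃ c : ℂ, c ≠ 0 ∧ ∀ ε : ℝ, 0 < ε → ∃ Y : ℝ, ∀ z : ℂ, Y ≤ z.im →
    ‖Complex.exp (-(2 * Real.pi * Complex.I * (ν : ℂ) * z / (N : ℂ))) * f z - c‖ < ε


/-- The translation matrix `(1 t; 0 1)` in `SL(2,ℝ)`. -/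
def upperTri (t : ℝ) : SL2R := ⟨!![1, t; 0, 1], by norm_num [Matrix.det_fin_two_of]⟩

/-- The cusp `∞` of `Γ` has width `N`: the translation by `N` lies in `Γ`, and every
upper-triangular element of `Γ` (i.e. a translation up to `±I`) translates by an
integer multiple of `N`. -/
def HasWidth (Γ : Subgroup SL2R) (N : ℝ) : Prop :=
  0 < N ∧ upperTri N ∈ Γ ∧
    ∀ γ ∈ Γ, γ.1 1 0 = 0 → ∃ m : ℤ, γ.1 0 1 = γ.1 0 0 * (m * N)

/-- exponential factor -/
def EE (N ν : ℝ) (z : ℂ) : ℂ := Complex.exp (-(2 * Real.pi * Complex.I * (ν : ℂ) * z / (N : ℂ)))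

def li : Filter ℂ := Filter.comap Complex.im Filter.atTop

theorem ev_li {p : ℂ → Prop} : (∀ᶠ z in li, p z) ↔ ∃ Y : ℝ, ∀ z : ℂ, Y ≤ z.im → p z := by
  unfold li
  rw [Filter.eventually_comap, Filter.eventually_atTop]
  constructor
  · rintro ⟨Y, h⟩
    exact ⟨Y, fun z hz => h _ hz z rfl⟩
  · rintro ⟨Y, h⟩
    exact ⟨Y, fun b hb z hz => h z (hz ▸ hb)⟩

theorem vorder_iff (N : ℝ) (f : ℂ → ℂ) (ν : ℝ) :
    VOrder N f ν ↔ ∃ c : ℂ, c ≠ 0 ∧ Tendsto (fun z => EE N ν z * f z) li (𝓝 c) := by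
  unfold VOrder
  simp only [Metric.tendsto_nhds, ev_li, dist_eq_norm, EE, gt_iff_lt]

theorem isOpen_UHP : IsOpen UHP := isOpen_lt continuous_const Complex.continuous_im

theorem ev_UHP : ∀ᶠ z in li, z ∈ UHP :=
  ev_li.2 ⟨1, fun z hz => lt_of_lt_of_le one_pos hz⟩

theorem deriv_tendsto (g : ℂ → ℂ) (hg : DifferentiableOn ℂ g UHP) (c : ℂ)
    (h : Tendsto g li (𝓝 c)) : Tendsto (deriv g) li (𝓝 0) := by
  rw [Metric.tendsto_nhds] at h ⊢
  intro ε hε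
  obtain ⟨Y, hY⟩ := ev_li.1 (h (ε / 2) (by positivity))
  refine ev_li.2 ⟨max Y 0 + 2, fun z hz => ?_⟩
  have him : ∀ w ∈ Metric.closedBall z 1, max Y 0 + 1 ≤ w.im := by
    intro w hw
    have h1 : ‖w - z‖ ≤ 1 := by simpa [dist_eq_norm] using hw
    have h2 := (abs_le.1 ((Complex.abs_im_le_norm (w - z)).trans h1)).1
    simp at h2
    linarith
  have h1 : ‖deriv (fun w => g w - c) z‖ ≤ (ε / 2) / 1 := by
    refine Complex.norm_deriv_le_of_forall_mem_sphere_norm_le one_pos ?_ ?_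
    · refine DifferentiableOn.diffContOnCl ?_
      rw [closure_ball z one_ne_zero]
      refine (hg.mono ?_).sub_const c
      intro w hw
      have := him w hw
      have := le_max_right Y 0
      show 0 < w.im
      linarith
    · intro w hw
      have := him w (Metric.sphere_subset_closedBall hw)
      have h3 := hY w (by have := le_max_left Y 0; linarith)
      rw [dist_eq_norm] at h3
      exact h3.le
  rw [deriv_sub_const] at h1
  rw [dist_zero_right]
  linarith

theorem EE_hasDeriv (N ν : ℝ) (z : ℂ) :
    HasDerivAt (EE N ν) (-(2 * Real.pi * Complex.I * (ν : ℂ) / (N : ℂ)) * EE N ν z) z := by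
  have h : HasDerivAt (fun z : ℂ => -(2 * Real.pi * Complex.I * (ν : ℂ) * z / (N : ℂ)))
      (-(2 * Real.pi * Complex.I * (ν : ℂ) / (N : ℂ))) z := by
    have := (((hasDerivAt_id z).const_mul (2 * Real.pi * Complex.I * (ν : ℂ))).div_const (N : ℂ)).neg
    rw [mul_one] at this
    exact this
  have := h.cexp
  unfold EE
  exact this.congr_deriv (mul_comm _ _)

theorem EE_add (N ν μ : ℝ) (z : ℂ) : EE N (ν + μ) z = EE N ν z * EE N μ z := by
  unfold EE
  rw [← Complex.exp_add]
  congr 1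
  push_cast
  ring

theorem EE_ne (N ν : ℝ) (z : ℂ) : EE N ν z ≠ 0 := Complex.exp_ne_zero _

theorem EE_decay (N ν : ℝ) (hN : 0 < N) (hν : ν < 0) : Tendsto (EE N ν) li (𝓝 0) := by
  rw [tendsto_zero_iff_norm_tendsto_zero]
  have h1 : ∀ z, ‖EE N ν z‖ = Real.exp ((2 * Real.pi * ν / N) * z.im) := by
    intro z
    unfold EE
    rw [Complex.norm_exp]
    congr 1
    have : -(2 * Real.pi * Complex.I * (ν : ℂ) * z / (N : ℂ))
        = ((-(2 * Real.pi * ν / N) : ℝ) : ℂ) * (Complex.I * z) := by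
      push_cast
      ring
    rw [this, Complex.re_ofReal_mul]
    simp
  simp only [h1]
  have h2 : 2 * Real.pi * ν / N < 0 :=
    div_neg_of_neg_of_pos (mul_neg_of_pos_of_neg (by positivity) hν) hN
  refine Real.tendsto_exp_atBot.comp ?_
  exact (Filter.tendsto_comap).const_mul_atTop_of_neg h2

theorem EE_deriv_tendsto (N ν : ℝ) (f : ℂ → ℂ) (hf : DifferentiableOn ℂ f UHP) (c : ℂ)
    (h : Tendsto (fun z => EE N ν z * f z) li (𝓝 c)) :
    Tendsto (fun z => EE N ν z * deriv f z) li
      (𝓝 ((2 * Real.pi * Complex.I * (ν : ℂ) / (N : ℂ)) * c)) := by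
  have hd : DifferentiableOn ℂ (fun z => EE N ν z * f z) UHP :=
    DifferentiableOn.mul (fun z _ => (EE_hasDeriv N ν z).differentiableAt.differentiableWithinAt) hf
  have h0 := deriv_tendsto _ hd c h
  have h1 := h0.add (h.const_mul (2 * Real.pi * Complex.I * (ν : ℂ) / (N : ℂ)))
  rw [zero_add] at h1
  refine h1.congr' ?_
  filter_upwards [ev_UHP] with z hz
  have hfz := (hf.differentiableAt (isOpen_UHP.mem_nhds hz)).hasDerivAt
  have := ((EE_hasDeriv N ν z).mul hfz).deriv
  rw [show deriv (fun z => EE N ν z * f z) z = _ from this]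
  ring

theorem EE_lower (N ν μ : ℝ) (hN : 0 < N) (hν : ν < μ) (f : ℂ → ℂ) (c : ℂ)
    (h : Tendsto (fun z => EE N μ z * f z) li (𝓝 c)) :
    Tendsto (fun z => EE N ν z * f z) li (𝓝 0) := by
  have h1 := (EE_decay N (ν - μ) hN (by linarith)).mul h
  rw [zero_mul] at h1
  refine h1.congr fun z => ?_
  rw [← mul_assoc, ← EE_add]
  congr 2
  ring

theorem W_case1 (N ν : ℝ) (f f₁ W : ℂ → ℂ) (α c d : ℂ) (hc : c ≠ 0)
    (hf : DifferentiableOn ℂ f UHP) (hf₁ : DifferentiableOn ℂ f₁ UHP)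
    (hW : ∀ z, W z = -(f z) ^ 2 + α * (f₁ z * deriv f z - deriv f₁ z * f z))
    (h : Tendsto (fun z => EE N ν z * f z) li (𝓝 c))
    (h₁ : Tendsto (fun z => EE N ν z * f₁ z) li (𝓝 d)) : VOrder N W (2 * ν) := by
  rw [vorder_iff]
  have h' := EE_deriv_tendsto N ν f hf c h
  have h₁' := EE_deriv_tendsto N ν f₁ hf₁ d h₁
  refine ⟨-c ^ 2, neg_ne_zero.2 (pow_ne_zero 2 hc), ?_⟩
  have := ((h.pow 2).neg).add (((h₁.mul h').sub (h₁'.mul h)).const_mul α)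
  convert this using 2 with z
  · rw [hW, two_mul, EE_add]
    ring
  · ring

theorem W_nonzero (N : ℝ) (hN : 0 < N) (f f₁ W : ℂ → ℂ) (α c χ : ℂ) (hc : c ≠ 0) (ν : ℝ)
    (hα : α ≠ 0) (hχ : χ ≠ 0)
    (hf : DifferentiableOn ℂ f UHP) (hf₁ : DifferentiableOn ℂ f₁ UHP)
    (hW : ∀ z, W z = -(f z) ^ 2 + α * (f₁ z * deriv f z - deriv f₁ z * f z))
    (h : Tendsto (fun z => EE N ν z * f z) li (𝓝 c))
    (hp : ∀ z ∈ UHP, f (z + N) = χ * f z) (hp₁ : ∀ z ∈ UHP, f₁ (z + N) = χ * f₁ z) :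
    ∃ z ∈ UHP, W z ≠ 0 := by
  by_contra! hcon
  obtain ⟨Y, hY⟩ := ev_li.1 ((h.eventually_ne hc).and ev_UHP)
  set S : Set ℂ := {z : ℂ | Y < z.im} with hS
  have hSo : IsOpen S := isOpen_lt continuous_const Complex.continuous_im
  have hSc : Convex ℝ S := convex_halfSpace_im_gt Y
  have hne : ∀ z ∈ S, f z ≠ 0 := fun z hz h0 => (hY z (le_of_lt hz)).1 (by rw [h0, mul_zero])
  have hU : ∀ z ∈ S, z ∈ UHP := fun z hz => (hY z (le_of_lt hz)).2
  have hder : ∀ z ∈ S, HasDerivAt (fun z => α * (f₁ z / f z) + z) 0 z := by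
    intro z hz
    have a := (hf.differentiableAt (isOpen_UHP.mem_nhds (hU z hz))).hasDerivAt
    have b := (hf₁.differentiableAt (isOpen_UHP.mem_nhds (hU z hz))).hasDerivAt
    have := ((b.div a (hne z hz)).const_mul α).add (hasDerivAt_id z)
    refine this.congr_deriv ?_
    have hw := hcon z (hU z hz)
    rw [hW] at hw
    have hz0 := hne z hz
    field_simp
    linear_combination -hw
  have hconst : ∀ x ∈ S, ∀ y ∈ S, α * (f₁ x / f x) + x = α * (f₁ y / f y) + y := fun x hx y hy => hSo.is_const_of_deriv_eq_zero hSc.isPreconnected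
    (fun z hz => (hder z hz).differentiableAt.differentiableWithinAt)
    (fun z hz => (hder z hz).deriv) hx hy
  have m1 : (((Y + 1 : ℝ) : ℂ) * Complex.I) ∈ S := by simp [hS]
  have m2 : (((Y + 1 : ℝ) : ℂ) * Complex.I + N) ∈ S := by simp [hS]
  have := hconst _ m2 _ m1
  rw [hp _ (hU _ m1), hp₁ _ (hU _ m1), mul_div_mul_left _ _ hχ] at this
  have h0 : (N : ℂ) = 0 := by linear_combination this
  exact hN.ne' (by exact_mod_cast h0)

/-- vanishing order of the Wronskian at `∞`.
With `Γ`, `χ`, `φ`, `f₀`, `f₁`, `f`, `W_f` as in Statement 0, where moreover the cusp `∞`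
of `Γ` has width `N` and `φ` is `N`-periodic and holomorphic at `∞`: if `f ≢ 0` then
`W_f ≢ 0`, and `v_∞(W_f) = 2v_∞(f)` when `v_∞(f) ≤ v_∞(f₁)`, while
`v_∞(W_f) = v_∞(f) + v_∞(f₁)` when `v_∞(f) > v_∞(f₁)` (with `v_∞(0) = +∞`, so that the
case `f₁ ≡ 0` falls under the first alternative). -/
theorem wronskian_vanishing_order_at_infinity
    (Γ : Subgroup SL2R) (hcomm : Subgroup.Commensurable SL2ZR Γ)
    (N : ℝ) (hwidth : HasWidth Γ N)
    (χ : SL2R → ℂ) (hχ : IsCharacter Γ χ)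
    (φ : ℂ → ℂ) (hφholo : DifferentiableOn ℂ φ UHP)
    (hφper : ∀ z ∈ UHP, φ (z + N) = φ z)
    (hφbdd : ∃ C : ℝ, ∀ z ∈ UHP, 1 ≤ z.im → ‖φ z‖ ≤ C)
    (α : ℂ) (hα : α ≠ 0) (hφqm : IsQuasiWt2 Γ α φ)
    (k : ℤ) (hk : 1 ≤ k)
    (f₀ f₁ : ℂ → ℂ)
    (hf₀ : IsModularForm Γ χ k f₀)
    (hf₁ : IsModularForm Γ χ (k - 2) f₁)
    (f W : ℂ → ℂ)
    (hf : ∀ z, f z = f₀ z + φ z * f₁ z)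
    (hW : ∀ z, W z = -(f z) ^ 2 + α * (f₁ z * deriv f z - deriv f₁ z * f z))
    (hfne : ∃ z ∈ UHP, f z ≠ 0)
    (νf : ℝ) (hνf : VOrder N f νf) :
    (∃ z ∈ UHP, W z ≠ 0) ∧
      (∀ νf₁ : ℝ, VOrder N f₁ νf₁ →
        (νf ≤ νf₁ → VOrder N W (2 * νf)) ∧ (νf₁ < νf → VOrder N W (νf + νf₁))) ∧
      ((∀ z ∈ UHP, f₁ z = 0) → VOrder N W (2 * νf)) := by
  obtain ⟨hN, hT, -⟩ := hwidth
  have hfd : DifferentiableOn ℂ f UHP := by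
    have : f = fun z => f₀ z + φ z * f₁ z := funext hf
    rw [this]
    exact hf₀.holo.add (hφholo.mul hf₁.holo)
  obtain ⟨c, hc, h⟩ := (vorder_iff _ _ _).1 hνf
  have hm : ∀ z, moeb (upperTri N) z = z + N := by
    intro z
    simp [moeb, upperTri]
  have hj : ∀ z, jfac (upperTri N) z = 1 := by
    intro z
    simp [jfac, upperTri]
  have hχ0 : χ (upperTri N) ≠ 0 := by
    obtain ⟨-, n, hn, hpow⟩ := hχ
    intro h0
    have := hpow _ hT
    rw [h0, zero_pow hn.ne'] at this
    exact zero_ne_one this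
  have hp₀ : ∀ z ∈ UHP, f₀ (z + N) = χ (upperTri N) * f₀ z := by
    intro z hz
    have := hf₀.transform _ hT z hz
    simpa [hm, hj] using this
  have hp₁ : ∀ z ∈ UHP, f₁ (z + N) = χ (upperTri N) * f₁ z := by
    intro z hz
    have := hf₁.transform _ hT z hz
    simpa [hm, hj] using this
  have hp : ∀ z ∈ UHP, f (z + N) = χ (upperTri N) * f z := by
    intro z hz
    rw [hf, hf, hp₀ z hz, hp₁ z hz, hφper z hz]
    ring
  refine ⟨W_nonzero N hN f f₁ W α c _ hc νf hα hχ0 hfd hf₁.holo hW h hp hp₁, ?_, ?_⟩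
  · intro ν₁ hν₁
    obtain ⟨d, hd, h₁⟩ := (vorder_iff _ _ _).1 hν₁
    constructor
    · intro hle
      rcases hle.eq_or_lt with heq | hlt
      · subst heq
        exact W_case1 N νf f f₁ W α c d hc hfd hf₁.holo hW h h₁
      · exact W_case1 N νf f f₁ W α c 0 hc hfd hf₁.holo hW h (EE_lower N νf ν₁ hN hlt f₁ d h₁)
    · intro hlt
      rw [vorder_iff]
      have h' := EE_deriv_tendsto N νf f hfd c h
      have h₁' := EE_deriv_tendsto N ν₁ f₁ hf₁.holo d h₁
      have hl := EE_lower N ν₁ νf hN hlt f c h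
      refine ⟨α * (2 * Real.pi * Complex.I / N) * ((νf - ν₁ : ℝ) : ℂ) * (c * d), ?_, ?_⟩
      · have e1 : ((νf - ν₁ : ℝ) : ℂ) ≠ 0 := by
          exact_mod_cast (sub_pos.2 hlt).ne'
        have e2 : (N : ℂ) ≠ 0 := by exact_mod_cast hN.ne'
        have e3 : (2 * Real.pi * Complex.I / N : ℂ) ≠ 0 :=
          div_ne_zero Complex.two_pi_I_ne_zero e2
        exact mul_ne_zero (mul_ne_zero (mul_ne_zero hα e3) e1) (mul_ne_zero hc hd)
      · have := ((h.mul hl).neg).add (((h₁.mul h').sub (h₁'.mul h)).const_mul α)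
        convert this using 2 with z
        · rw [hW, EE_add]
          ring
        · push_cast
          ring
  · intro h0
    refine W_case1 N νf f f₁ W α c 0 hc hfd hf₁.holo hW h ?_
    refine tendsto_const_nhds.congr' ?_
    filter_upwards [ev_UHP] with z hz
    rw [h0 z hz, mul_zero]
end
end

section
/- Let Γ be a subgroup of SL(2,ℝ) commensurable with SL(2,ℤ) and let φ: ℍ → ℂ be holomorphic such that for some nonzero α ∈ ℂ one has (cz+d)^{-2} φ((az+b)/(cz+d)) = φ(z) + α c/(cz+d) for all (a b; c d) ∈ Γ. If z₀ ∈ ℍ is an elliptic point of Γ, i.e. there exists γ ∈ Γ with γ ≠ ±I and γ z₀ = z₀, then φ(z₀) ≠ 0. -/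
noncomputable section

open Complex Matrix Filter Topology

/-- Lemma: a quasimodular form of weight 2 and depth 1 on `Γ` does not
vanish at any elliptic point of `Γ`. -/
theorem quasimodular_wt2_nonvanishing_at_elliptic
    (Γ : Subgroup SL2R) (hcomm : Subgroup.Commensurable SL2ZR Γ)
    (φ : ℂ → ℂ) (hφholo : DifferentiableOn ℂ φ UHP)
    (α : ℂ) (hα : α ≠ 0) (hφqm : IsQuasiWt2 Γ α φ)
    (z₀ : ℂ) (hz₀ : z₀ ∈ UHP)
    (γ : SL2R) (hγ : γ ∈ Γ)
    (hγI : (γ : Matrix (Fin 2) (Fin 2) ℝ) ≠ 1)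
    (hγnI : (γ : Matrix (Fin 2) (Fin 2) ℝ) ≠ -1)
    (hfix : moeb γ z₀ = z₀) :
    φ z₀ ≠ 0 := by
  intro h0
  have him : 0 < z₀.im := hz₀
  have hq := hφqm γ hγ z₀ hz₀
  rw [hfix, h0] at hq
  have hdet : γ.1 0 0 * γ.1 1 1 - γ.1 0 1 * γ.1 1 0 = 1 := by
    have := γ.2
    rwa [Matrix.det_fin_two] at this
  have hj : jfac γ z₀ ≠ 0 := by
    intro hj
    have h1 := congrArg Complex.im hj
    have h2 := congrArg Complex.re hj
    simp [jfac] at h1 h2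
    have hc : γ.1 1 0 = 0 := by
      rcases h1 with h | h
      · exact h
      · exact absurd h him.ne'
    simp only [hc] at h2 hdet
    simp at h2
    simp [h2] at hdet
  have hc : γ.1 1 0 = 0 := by
    have h3 : α * (γ.1 1 0 : ℂ) / jfac γ z₀ = 0 := by
      simpa using hq.symm
    rcases div_eq_zero_iff.mp h3 with h | h
    · rcases mul_eq_zero.mp h with h | h
      · exact absurd h hα
      · exact_mod_cast h
    · exact absurd h hj
  have hf : (γ.1 0 0 : ℂ) * z₀ + (γ.1 0 1 : ℂ)
      = z₀ * ((γ.1 1 0 : ℂ) * z₀ + (γ.1 1 1 : ℂ)) := (div_eq_iff hj).mp hfix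
  rw [hc] at hf hdet
  have h1 := congrArg Complex.im hf
  have h2 := congrArg Complex.re hf
  simp at h1 h2
  have had : γ.1 0 0 = γ.1 1 1 := by
    apply mul_right_cancel₀ him.ne'
    linarith
  have hb : γ.1 0 1 = 0 := by
    rw [had] at h2
    linarith
  have hsq : (γ.1 1 1 - 1) * (γ.1 1 1 + 1) = 0 := by
    rw [had] at hdet
    linarith
  rcases mul_eq_zero.mp hsq with h | h
  · have hd : γ.1 1 1 = 1 := by linarith
    apply hγI
    ext i j
    fin_cases i <;> fin_cases j <;> simp [hc, hb, had, hd]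
  · have hd : γ.1 1 1 = -1 := by linarith
    apply hγnI
    ext i j
    fin_cases i <;> fin_cases j <;> simp [hc, hb, had, hd]
end
end
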